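/- Let A be a partial H-module algebra. A vector space M is a right partial (A,H)-module (i.e., a right A-module with a map M⊗H → M satisfying m◂1_H = m and ((m◂h)a)◂g = Σ(m(h₁·a))◂(h₂g)) if and only if M is a right module over the partial smash product A#H, via m(a#h) = (ma)◂h; moreover ann_A(M) = ann_{A#H}(M) ∩ A. -/

import Mathlib

/-!
The products `(a # h)(b # g)` are computed in the convolution algebra `Hom(H, A)`. The partial
action sends `b` to the map `h ↦ h · b`, which is multiplicative in `b`, so the factor `h₁ · 1`
in the axiom for `h · (g · c)` is absorbed by a preceding `h · b`:
`h · (b (g · c)) = Σ (h₁ · b) (h₂ g · c)`. This identity makes `A ⊗ H` associative, with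
`1 # 1` a left unit.

In the smash product one has `(1 # h) a (1 # g) = Σ (h₁ · a) (1 # h₂ g)`, and the compatibility
axiom of a partial module is this relation read in `End M`.
-/

open TensorProduct

noncomputable section

variable (k : Type*) [Field k]

/-- The "Sweedler sum" `h ↦ Σ f(h₁) * g(h₂)`. -/
def sweedler {H A : Type*} [Ring H] [HopfAlgebra k H]
    [Ring A] [Algebra k A] (f g : H →ₗ[k] A) : H →ₗ[k] A :=
  (LinearMap.mul' k A) ∘ₗ (TensorProduct.map f g) ∘ₗ Coalgebra.comul

/-- A (left) partial `H`-module algebra structure on a unital algebra `A`: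
`1_H · a = a`, `h · (ab) = Σ (h₁·a)(h₂·b)` and `h·(g·b) = Σ (h₁·1)((h₂ g)·b)`. -/
structure PartialModuleAlgebra (H A : Type*) [Ring H] [HopfAlgebra k H]
    [Ring A] [Algebra k A] where
  act : H →ₗ[k] A →ₗ[k] A
  one_act : ∀ a : A, act 1 a = a
  act_mul : ∀ (h : H) (a b : A),
    act h (a * b) = sweedler k (act.flip a) (act.flip b) h
  act_act : ∀ (h g : H) (b : A),
    act h (act g b) =
      sweedler k (act.flip 1) ((act.flip b) ∘ₗ LinearMap.mulRight k g) h

variable {H A : Type*} [Ring H] [HopfAlgebra k H] [Ring A] [Algebra k A]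

/-- A (two-sided) ideal of `A`, encoded as a `k`-submodule closed under multiplication
by elements of `A` on both sides. -/
def IsIdeal (I : Submodule k A) : Prop :=
  ∀ a ∈ I, ∀ b : A, a * b ∈ I ∧ b * a ∈ I

/-- An `H`-stable subspace: `H · I ⊆ I`. -/
def Hstable (ξ : PartialModuleAlgebra k H A) (I : Submodule k A) : Prop :=
  ∀ (h : H), ∀ x ∈ I, ξ.act h x ∈ I

/-- `(I : H) = {x ∈ I | h · x ∈ I for all h ∈ H}`. -/
def colonH (ξ : PartialModuleAlgebra k H A) (I : Submodule k A) : Submodule k A :=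
  I ⊓ ⨅ h : H, Submodule.comap (ξ.act h) I

/-- `μ` realizes the smash-product multiplication on `A ⊗ H`:
`(a # h)(b # g) = Σ a(h₁·b) # h₂ g`. -/
def SmashMulFormula (ξ : PartialModuleAlgebra k H A)
    (μ : (A ⊗[k] H) →ₗ[k] (A ⊗[k] H) →ₗ[k] (A ⊗[k] H)) : Prop :=
  ∀ (a b : A) (h g : H),
    μ (a ⊗ₜ[k] h) (b ⊗ₜ[k] g) =
      (TensorProduct.map ((LinearMap.mulLeft k a) ∘ₗ ξ.act.flip b)
        (LinearMap.mulRight k g)) (Coalgebra.comul h)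

variable (H A) in
/-- The element `1_A ⊗ 1_H`. -/
def smashE : A ⊗[k] H := (1 : A) ⊗ₜ[k] (1 : H)

/-- The partial smash product `A # H = (A ⊗ H)(1_A # 1_H)` as a subspace of `A ⊗ H`. -/
def smashS (μ : (A ⊗[k] H) →ₗ[k] (A ⊗[k] H) →ₗ[k] (A ⊗[k] H)) : Submodule k (A ⊗[k] H) :=
  LinearMap.range (μ.flip (smashE k H A))

/-- The canonical embedding `A → A # H`, `a ↦ a # 1_H`. -/
def smashF (μ : (A ⊗[k] H) →ₗ[k] (A ⊗[k] H) →ₗ[k] (A ⊗[k] H)) : A →ₗ[k] A ⊗[k] H :=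
  (μ.flip (smashE k H A)) ∘ₗ ((TensorProduct.mk k A H).flip 1)

variable {M : Type*} [AddCommGroup M] [Module k M]

/-- A right partial `(A,H)`-module structure on `M` (actions written on the left):
`ra a m = m·a`, `rh h m = m ◂ h`, satisfying the right `A`-module axioms, `m ◂ 1_H = m`,
and `((m ◂ h)a) ◂ g = Σ (m (h₁·a)) ◂ (h₂ g)`. -/
def IsRightPartialModule (ξ : PartialModuleAlgebra k H A)
    (ra : A →ₗ[k] M →ₗ[k] M) (rh : H →ₗ[k] M →ₗ[k] M) : Prop :=
  (∀ m : M, ra 1 m = m) ∧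
  (∀ (a b : A) (m : M), ra (a * b) m = ra b (ra a m)) ∧
  (∀ m : M, rh 1 m = m) ∧
  (∀ (h g : H) (a : A) (m : M),
    rh g (ra a (rh h m)) =
      TensorProduct.lift
        (((rh ∘ₗ LinearMap.mulRight k g).flip) ∘ₗ ((ra.flip m) ∘ₗ ξ.act.flip a))
        (Coalgebra.comul h))

/-- A right module structure on `M` over the partial smash product `A # H`
(the corner `S = (A ⊗ H)(1_A # 1_H)` with multiplication `μ`). -/
def IsSmashModule (μ : (A ⊗[k] H) →ₗ[k] (A ⊗[k] H) →ₗ[k] (A ⊗[k] H))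
    (sm : (A ⊗[k] H) →ₗ[k] M →ₗ[k] M) : Prop :=
  (∀ m : M, sm (smashE k H A) m = m) ∧
  (∀ x ∈ smashS k μ, ∀ y ∈ smashS k μ, ∀ m : M, sm (μ x y) m = sm y (sm x m))

section Sweedler

open Coalgebra WithConv

variable {R C N B D ι : Type*} [CommSemiring R]

theorem lift_comul_eq_sum [AddCommMonoid C] [Module R C] [CoalgebraStruct R C]
    [AddCommMonoid N] [Module R N] {c : C} (r : Repr R c ι) (f : C →ₗ[R] C →ₗ[R] N) :
    TensorProduct.lift f (comul c) = ∑ i ∈ r.index, f (r.left i) (r.right i) := by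
  simp [← r.eq]

theorem convMul_comp_mulRight [Semiring B] [Bialgebra R B] [NonUnitalNonAssocSemiring D]
    [Module R D] [SMulCommClass R D D] [IsScalarTower R D D] {g : B}
    (r : Repr R g ι) (φ ψ : WithConv (B →ₗ[R] D)) :
    toConv ((φ * ψ).ofConv ∘ₗ LinearMap.mulRight R g) =
      ∑ i ∈ r.index, toConv (φ.ofConv ∘ₗ LinearMap.mulRight R (r.left i)) *
        toConv (ψ.ofConv ∘ₗ LinearMap.mulRight R (r.right i)) := by
  ext h
  simp [← r.eq, ← (ℛ R h).eq, Finset.mul_sum, Finset.sum_mul]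

end Sweedler

section PartialAction

open Coalgebra WithConv

variable {k}

namespace PartialModuleAlgebra

variable (ξ : PartialModuleAlgebra k H A)

/-- The orbit map `h ↦ h · b` of `b`, as an element of the convolution algebra `Hom(H, A)`. -/
def orbit (b : A) : WithConv (H →ₗ[k] A) :=
  toConv (ξ.act.flip b)

theorem orbit_mul (a b : A) : ξ.orbit (a * b) = ξ.orbit a * ξ.orbit b := by
  ext h
  exact ξ.act_mul h a b

theorem orbit_act (g : H) (b : A) :
    ξ.orbit (ξ.act g b) = ξ.orbit 1 * toConv ((ξ.orbit b).ofConv ∘ₗ LinearMap.mulRight k g) := by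
  ext h
  exact ξ.act_act h g b

theorem orbit_mul_act (b : A) (g : H) (c : A) :
    ξ.orbit (b * ξ.act g c) =
      ξ.orbit b * toConv ((ξ.orbit c).ofConv ∘ₗ LinearMap.mulRight k g) := by
  rw [orbit_mul, orbit_act, ← mul_assoc, ← orbit_mul, mul_one]

/-- The orbit map `h ↦ (h · b) ⊗ 1` in the convolution algebra `Hom(H, A ⊗ H)`, where `A ⊗ H` is
the tensor product algebra. -/
def orbitTmulOne (b : A) : WithConv (H →ₗ[k] A ⊗[k] H) :=
  toConv (Algebra.TensorProduct.includeLeft.toLinearMap ∘ₗ (ξ.orbit b).ofConv)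

theorem orbitTmulOne_apply (b : A) (h : H) : ξ.orbitTmulOne b h = ξ.act h b ⊗ₜ[k] 1 :=
  rfl

theorem orbitTmulOne_mul_act (b : A) (g : H) (c : A) :
    ξ.orbitTmulOne (b * ξ.act g c) =
      ξ.orbitTmulOne b * toConv ((ξ.orbitTmulOne c).ofConv ∘ₗ LinearMap.mulRight k g) := by
  rw [orbitTmulOne, orbit_mul_act, LinearMap.algHom_comp_convMul_distrib]
  rfl

end PartialModuleAlgebra

/-- The orbit map `h ↦ (1 # h) y` of `y` under left multiplication by `1 # H`, as an element of the
convolution algebra `Hom(H, A ⊗ H)`. -/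
def smashOrbit (μ : (A ⊗[k] H) →ₗ[k] (A ⊗[k] H) →ₗ[k] (A ⊗[k] H)) :
    A ⊗[k] H →ₗ[k] WithConv (H →ₗ[k] A ⊗[k] H) :=
  (WithConv.linearEquiv k _).symm.toLinearMap ∘ₗ (TensorProduct.mk k A H 1).lcomp k _ ∘ₗ μ.flip

theorem smashOrbit_apply (μ : (A ⊗[k] H) →ₗ[k] (A ⊗[k] H) →ₗ[k] (A ⊗[k] H)) (y : A ⊗[k] H)
    (h : H) : smashOrbit μ y h = μ (1 ⊗ₜ[k] h) y :=
  rfl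

namespace SmashMulFormula

variable {ξ : PartialModuleAlgebra k H A}
  {μ : (A ⊗[k] H) →ₗ[k] (A ⊗[k] H) →ₗ[k] (A ⊗[k] H)}

theorem tmul_mul_tmul (hμ : SmashMulFormula k ξ μ) {ι : Type*} {h : H} (r : Repr k h ι) (a b : A)
    (g : H) :
    μ (a ⊗ₜ[k] h) (b ⊗ₜ[k] g) =
      ∑ i ∈ r.index, (a * ξ.act (r.left i) b) ⊗ₜ[k] (r.right i * g) := by
  simp [hμ a b h g, ← r.eq]

theorem tmul_mul (hμ : SmashMulFormula k ξ μ) (a : A) (h : H) (y : A ⊗[k] H) :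
    μ (a ⊗ₜ[k] h) y = (a ⊗ₜ[k] 1) * μ (1 ⊗ₜ[k] h) y := by
  induction y with
  | zero => simp
  | add y y' hy hy' => simp only [map_add, mul_add, hy, hy']
  | tmul b g => simp [hμ.tmul_mul_tmul (ℛ k h), Finset.mul_sum]

theorem smashOrbit_tmul (hμ : SmashMulFormula k ξ μ) (b : A) (g : H) :
    smashOrbit μ (b ⊗ₜ[k] g) = ξ.orbitTmulOne b *
      toConv (TensorProduct.mk k A H 1 ∘ₗ LinearMap.mulRight k g) := by
  ext h
  rw [(ℛ k h).convMul_apply]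
  simp [smashOrbit_apply, ξ.orbitTmulOne_apply, hμ.tmul_mul_tmul (ℛ k h)]

theorem smashOrbit_mul (hμ : SmashMulFormula k ξ μ) (b : A) (g : H) (z : A ⊗[k] H) :
    smashOrbit μ (μ (b ⊗ₜ[k] g) z) =
      ξ.orbitTmulOne b * toConv ((smashOrbit μ z).ofConv ∘ₗ LinearMap.mulRight k g) := by
  induction z with
  | zero => simp
  | add z z' hz hz' => simp [hz, hz', LinearMap.add_comp, mul_add]
  | tmul c l =>
    calc smashOrbit μ (μ (b ⊗ₜ[k] g) (c ⊗ₜ[k] l))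
        = ∑ i ∈ (ℛ k g).index, smashOrbit μ
            ((b * ξ.act ((ℛ k g).left i) c) ⊗ₜ[k] ((ℛ k g).right i * l)) := by
          rw [hμ.tmul_mul_tmul (ℛ k g), map_sum]
      _ = ξ.orbitTmulOne b * ∑ i ∈ (ℛ k g).index,
            toConv ((ξ.orbitTmulOne c).ofConv ∘ₗ LinearMap.mulRight k ((ℛ k g).left i)) *
              toConv (TensorProduct.mk k A H 1 ∘ₗ
                LinearMap.mulRight k ((ℛ k g).right i * l)) := by
          simp only [hμ.smashOrbit_tmul, ξ.orbitTmulOne_mul_act, Finset.mul_sum, mul_assoc]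
      _ = ξ.orbitTmulOne b *
            toConv ((smashOrbit μ (c ⊗ₜ[k] l)).ofConv ∘ₗ LinearMap.mulRight k g) := by
          rw [hμ.smashOrbit_tmul, convMul_comp_mulRight (ℛ k g)]
          simp only [LinearMap.mulRight_mul, LinearMap.comp_assoc]

theorem assoc (hμ : SmashMulFormula k ξ μ) (x y z : A ⊗[k] H) :
    μ (μ x y) z = μ x (μ y z) := by
  induction x with
  | zero => simp
  | add x x' hx hx' => simp only [map_add, LinearMap.add_apply, hx, hx']
  | tmul a h =>
    induction y with
    | zero => simp
    | add y y' hy hy' => simp only [map_add, LinearMap.add_apply, hy, hy']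
    | tmul b g =>
      calc μ (μ (a ⊗ₜ[k] h) (b ⊗ₜ[k] g)) z
          = ∑ i ∈ (ℛ k h).index, ((a * ξ.act ((ℛ k h).left i) b) ⊗ₜ[k] 1) *
              μ (1 ⊗ₜ[k] ((ℛ k h).right i * g)) z := by
            rw [hμ.tmul_mul_tmul (ℛ k h), map_sum, LinearMap.sum_apply]
            simp only [← hμ.tmul_mul]
        _ = (a ⊗ₜ[k] 1) * smashOrbit μ (μ (b ⊗ₜ[k] g) z) h := by
            rw [hμ.smashOrbit_mul, (ℛ k h).convMul_apply]
            simp [smashOrbit_apply, ξ.orbitTmulOne_apply, Finset.mul_sum, ← mul_assoc]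
        _ = μ (a ⊗ₜ[k] h) (μ (b ⊗ₜ[k] g) z) := (hμ.tmul_mul a h _).symm

theorem tmul_one_mul_tmul (hμ : SmashMulFormula k ξ μ) (a b : A) (g : H) :
    μ (a ⊗ₜ[k] 1) (b ⊗ₜ[k] g) = (a * b) ⊗ₜ[k] g := by
  simp [hμ a b 1 g, ξ.one_act, Algebra.TensorProduct.one_def]

theorem smashE_mul (hμ : SmashMulFormula k ξ μ) (x : A ⊗[k] H) : μ (smashE k H A) x = x := by
  induction x with
  | zero => simp
  | add x y hx hy => rw [map_add, hx, hy]
  | tmul a h => rw [smashE, hμ.tmul_one_mul_tmul, one_mul]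

theorem smashF_apply (hμ : SmashMulFormula k ξ μ) (a : A) : smashF k μ a = a ⊗ₜ[k] 1 := by
  simp [smashF, smashE, hμ.tmul_one_mul_tmul]

end SmashMulFormula

end PartialAction

section Corner

open Coalgebra

variable {k} {ξ : PartialModuleAlgebra k H A}
  {μ : (A ⊗[k] H) →ₗ[k] (A ⊗[k] H) →ₗ[k] (A ⊗[k] H)}

variable (k) in
/-- The map `H → A # H`, `h ↦ 1_A # h`, the counterpart for `H` of the embedding `smashF`. -/
def smashH (μ : (A ⊗[k] H) →ₗ[k] (A ⊗[k] H) →ₗ[k] (A ⊗[k] H)) : H →ₗ[k] A ⊗[k] H :=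
  (μ.flip (smashE k H A)) ∘ₗ (TensorProduct.mk k A H 1)

theorem smashF_mem_smashS (a : A) : smashF k μ a ∈ smashS k μ :=
  ⟨a ⊗ₜ[k] 1, rfl⟩

theorem smashH_mem_smashS (h : H) : smashH k μ h ∈ smashS k μ :=
  ⟨1 ⊗ₜ[k] h, rfl⟩

namespace SmashMulFormula

theorem mul_mem_smashS (hμ : SmashMulFormula k ξ μ) (x : A ⊗[k] H) {y : A ⊗[k] H}
    (hy : y ∈ smashS k μ) : μ x y ∈ smashS k μ := by
  obtain ⟨y, rfl⟩ := hy
  exact ⟨μ x y, hμ.assoc x y _⟩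

theorem smashH_mul (hμ : SmashMulFormula k ξ μ) (h : H) (y : A ⊗[k] H) :
    μ (smashH k μ h) y = μ (1 ⊗ₜ[k] h) y := by
  rw [smashH, LinearMap.comp_apply, LinearMap.flip_apply, hμ.assoc, hμ.smashE_mul,
    TensorProduct.mk_apply]

theorem smashF_mul_smashF (hμ : SmashMulFormula k ξ μ) (a b : A) :
    μ (smashF k μ a) (smashF k μ b) = smashF k μ (a * b) := by
  simp only [hμ.smashF_apply, hμ.tmul_one_mul_tmul]

theorem smashF_mul_smashH (hμ : SmashMulFormula k ξ μ) (a : A) (h : H) :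
    μ (smashF k μ a) (smashH k μ h) = μ (a ⊗ₜ[k] h) (smashE k H A) := by
  rw [smashH, LinearMap.comp_apply, LinearMap.flip_apply, ← hμ.assoc, hμ.smashF_apply,
    TensorProduct.mk_apply, hμ.tmul_one_mul_tmul, mul_one]

theorem smashH_mul_smashF_mul_smashH (hμ : SmashMulFormula k ξ μ) {ι : Type*} {h : H}
    (r : Repr k h ι) (a : A) (g : H) :
    μ (μ (smashH k μ h) (smashF k μ a)) (smashH k μ g) =
      ∑ i ∈ r.index, μ (smashF k μ (ξ.act (r.left i) a)) (smashH k μ (r.right i * g)) := by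
  calc μ (μ (smashH k μ h) (smashF k μ a)) (smashH k μ g)
      = μ (μ (1 ⊗ₜ[k] h) (a ⊗ₜ[k] g)) (smashE k H A) := by
        rw [hμ.assoc, hμ.smashF_mul_smashH, hμ.smashH_mul, hμ.assoc]
    _ = ∑ i ∈ r.index, μ (ξ.act (r.left i) a ⊗ₜ[k] (r.right i * g)) (smashE k H A) := by
        simp [hμ.tmul_mul_tmul r]
    _ = ∑ i ∈ r.index, μ (smashF k μ (ξ.act (r.left i) a)) (smashH k μ (r.right i * g)) := by
        simp only [hμ.smashF_mul_smashH]

end SmashMulFormula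

end Corner

section Modules

open Coalgebra

section TensorAction

variable {R U V N : Type*} [CommSemiring R] [AddCommMonoid U] [Module R U] [AddCommMonoid V]
  [Module R V] [AddCommMonoid N] [Module R N]

/-- The action `m (a # h) = (m a) ◂ h` of a tensor product on a module on which both factors
act. -/
def smashAct (ra : U →ₗ[R] N →ₗ[R] N) (rh : V →ₗ[R] N →ₗ[R] N) : U ⊗[R] V →ₗ[R] N →ₗ[R] N :=
  TensorProduct.lift ((LinearMap.mul R (Module.End R N)).flip.compl₁₂ ra rh)

theorem smashAct_tmul (ra : U →ₗ[R] N →ₗ[R] N) (rh : V →ₗ[R] N →ₗ[R] N) (a : U) (h : V) (m : N) :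
    smashAct ra rh (a ⊗ₜ[R] h) m = rh h (ra a m) :=
  rfl

end TensorAction

variable {k} {ξ : PartialModuleAlgebra k H A}
  {μ : (A ⊗[k] H) →ₗ[k] (A ⊗[k] H) →ₗ[k] (A ⊗[k] H)}

namespace IsRightPartialModule

variable {ra : A →ₗ[k] M →ₗ[k] M} {rh : H →ₗ[k] M →ₗ[k] M}

theorem smashAct_smashE (hM : IsRightPartialModule k ξ ra rh) (m : M) :
    smashAct ra rh (smashE k H A) m = m := by
  obtain ⟨ra_one, -, rh_one, -⟩ := hM
  rw [smashE, smashAct_tmul, ra_one, rh_one]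

theorem smashAct_mul (hM : IsRightPartialModule k ξ ra rh) (hμ : SmashMulFormula k ξ μ)
    (x y : A ⊗[k] H) (m : M) :
    smashAct ra rh (μ x y) m = smashAct ra rh y (smashAct ra rh x m) := by
  obtain ⟨-, ra_mul, -, compat⟩ := hM
  induction x with
  | zero => simp
  | add x x' hx hx' => simp only [map_add, LinearMap.add_apply, hx, hx']
  | tmul a h =>
    induction y with
    | zero => simp
    | add y y' hy hy' => simp only [map_add, LinearMap.add_apply, hy, hy']
    | tmul b g =>
      rw [smashAct_tmul, smashAct_tmul, compat, lift_comul_eq_sum (ℛ k h),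
        hμ.tmul_mul_tmul (ℛ k h)]
      simp [smashAct_tmul, ra_mul]

theorem isSmashModule_smashAct (hM : IsRightPartialModule k ξ ra rh)
    (hμ : SmashMulFormula k ξ μ) : IsSmashModule k μ (smashAct ra rh) :=
  ⟨hM.smashAct_smashE, fun x _ y _ ↦ hM.smashAct_mul hμ x y⟩

theorem smashAct_mul_smashE (hM : IsRightPartialModule k ξ ra rh) (hμ : SmashMulFormula k ξ μ)
    (x : A ⊗[k] H) (m : M) :
    smashAct ra rh (μ x (smashE k H A)) m = smashAct ra rh x m := by
  rw [hM.smashAct_mul hμ, hM.smashAct_smashE]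

theorem smashAct_smashF (hM : IsRightPartialModule k ξ ra rh) (hμ : SmashMulFormula k ξ μ)
    (a : A) (m : M) : smashAct ra rh (smashF k μ a) m = ra a m := by
  obtain ⟨-, -, rh_one, -⟩ := hM
  rw [hμ.smashF_apply, smashAct_tmul, rh_one]

end IsRightPartialModule

theorem IsSmashModule.isRightPartialModule {sm : (A ⊗[k] H) →ₗ[k] M →ₗ[k] M}
    (hM : IsSmashModule k μ sm) (hμ : SmashMulFormula k ξ μ) :
    IsRightPartialModule k ξ (sm ∘ₗ smashF k μ) (sm ∘ₗ smashH k μ) := by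
  obtain ⟨sm_one, sm_mul⟩ := hM
  have smashF_one : smashF k μ 1 = smashE k H A := hμ.smashF_apply 1
  have smashH_one : smashH k μ 1 = smashE k H A := hμ.smashE_mul _
  refine ⟨fun m ↦ ?_, fun a b m ↦ ?_, fun m ↦ ?_, fun h g a m ↦ ?_⟩
  · rw [LinearMap.comp_apply, smashF_one, sm_one]
  · simp only [LinearMap.comp_apply]
    rw [← hμ.smashF_mul_smashF, sm_mul _ (smashF_mem_smashS a) _ (smashF_mem_smashS b)]
  · rw [LinearMap.comp_apply, smashH_one, sm_one]
  · rw [lift_comul_eq_sum (ℛ k h)]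
    calc sm (smashH k μ g) (sm (smashF k μ a) (sm (smashH k μ h) m))
        = sm (μ (μ (smashH k μ h) (smashF k μ a)) (smashH k μ g)) m := by
          rw [sm_mul _ (hμ.mul_mem_smashS _ (smashF_mem_smashS a)) _ (smashH_mem_smashS g),
            sm_mul _ (smashH_mem_smashS h) _ (smashF_mem_smashS a)]
      _ = ∑ i ∈ (ℛ k h).index, sm (smashH k μ ((ℛ k h).right i * g))
            (sm (smashF k μ (ξ.act ((ℛ k h).left i) a)) m) := by
          rw [hμ.smashH_mul_smashF_mul_smashH (ℛ k h), map_sum, LinearMap.sum_apply]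
          exact Finset.sum_congr rfl fun i _ ↦
            sm_mul _ (smashF_mem_smashS _) _ (smashH_mem_smashS _) m

end Modules

/-- `M` is a right partial `(A,H)`-module iff `M` is a right `A # H`-module, via
`m (a # h) = (m a) ◂ h`; moreover `ann_A(M) = ann_{A#H}(M) ∩ A`. -/
theorem rightPartialModule_iff_smashModule (ξ : PartialModuleAlgebra k H A)
    (μ : (A ⊗[k] H) →ₗ[k] (A ⊗[k] H) →ₗ[k] (A ⊗[k] H)) (hμ : SmashMulFormula k ξ μ) :
    -- from a partial `(A,H)`-module to an `A # H`-module
    (∀ (ra : A →ₗ[k] M →ₗ[k] M) (rh : H →ₗ[k] M →ₗ[k] M),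
      IsRightPartialModule k ξ ra rh →
        ∃ sm : (A ⊗[k] H) →ₗ[k] M →ₗ[k] M, IsSmashModule k μ sm ∧
          (∀ (a : A) (h : H) (m : M), sm (μ (a ⊗ₜ[k] h) (smashE k H A)) m = rh h (ra a m)) ∧
          -- `ann_A(M) = ann_{A#H}(M) ∩ A`
          (∀ a : A, (∀ m : M, ra a m = 0) ↔ (∀ m : M, sm (smashF k μ a) m = 0))) ∧
    -- from an `A # H`-module to a partial `(A,H)`-module
    (∀ sm : (A ⊗[k] H) →ₗ[k] M →ₗ[k] M, IsSmashModule k μ sm →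
      IsRightPartialModule k ξ (sm ∘ₗ smashF k μ)
        (sm ∘ₗ ((μ.flip (smashE k H A)) ∘ₗ (TensorProduct.mk k A H (1 : A))))) := by
  refine ⟨fun ra rh hM ↦ ⟨smashAct ra rh, hM.isSmashModule_smashAct hμ, fun a h m ↦ ?_, fun a ↦ ?_⟩,
    fun sm hM ↦ hM.isRightPartialModule hμ⟩
  · rw [hM.smashAct_mul_smashE hμ, smashAct_tmul]
  · simp only [hM.smashAct_smashF hμ]
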